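/- Let o, ô ∈ ℝ^d, W_U ∈ ℝ^{d×d_int}, W_D ∈ ℝ^{d_int×d}, E ∈ ℝ^{m×d}, and let σ : ℝ → ℝ be G_σ-Lipschitz, applied entrywise. Then ‖softmax(σ(o W_U) W_D Eᵀ) − softmax(σ(ô W_U) W_D Eᵀ)‖₁ ≤ ‖E‖_{2→1} ‖W_D‖₂ G_σ ‖W_U‖₂ ‖o − ô‖₂. -/

import Mathlib

/-!
The bound is a composition of Lipschitz estimates. The linear maps contribute their operator norms
(`l2_vecMul_le`, `l1_vecMul_le`) and the entrywise activation contributes `Gσ`, so what remains is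
that softmax is `1`-Lipschitz from `ℓ¹` to `ℓ¹` (`softmax_l1_lipschitz`).

For that, `‖softmax a - softmax b‖₁` is written as `g 1 - g 0`, where
`g t = ∑ j, s j * softmax (b + t (a - b)) j` and `s j ∈ {-1, 0, 1}` are the signs of the differences. With
`p = softmax (b + t v)`, `v = a - b`, one has `g' t = ∑ j, v j * p j * (s j - ∑ k, p k * s k)`, and
`|s j - ∑ k, p k * s k| ≤ 2 (1 - p j)`, so each coefficient of `v j` is at most
`2 p j (1 - p j) ≤ 1` and the mean value theorem gives the claim.
-/

open scoped BigOperators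
open Matrix

/-- Softmax of a vector. -/
noncomputable def softmax {n : ℕ} (z : Fin n → ℝ) : Fin n → ℝ :=
  fun j => Real.exp (z j) / ∑ k, Real.exp (z k)

/-- ℓ¹ norm. -/
noncomputable def l1 {n : ℕ} (v : Fin n → ℝ) : ℝ := ∑ j, |v j|

/-- ℓ² (Euclidean) norm. -/
noncomputable def l2 {n : ℕ} (v : Fin n → ℝ) : ℝ := Real.sqrt (∑ j, v j ^ 2)

/-- ℓ^∞ norm. -/
noncomputable def linf {n : ℕ} (v : Fin n → ℝ) : ℝ := ⨆ j, |v j|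

/-- Spectral norm (operator ℓ²→ℓ² norm) of a matrix acting on row vectors. -/
noncomputable def spec {m n : ℕ} (W : Matrix (Fin m) (Fin n) ℝ) : ℝ :=
  sSup {c | ∃ x : Fin m → ℝ, l2 x ≤ 1 ∧ c = l2 (x ᵥ* W)}

/-- Frobenius norm of a matrix. -/
noncomputable def frob {m n : ℕ} (W : Matrix (Fin m) (Fin n) ℝ) : ℝ :=
  Real.sqrt (∑ i, ∑ j, W i j ^ 2)

/-- Operator norm of `h ↦ h Eᵀ` from ℓ² to ℓ¹. -/
noncomputable def opNorm21 {m d : ℕ} (E : Matrix (Fin m) (Fin d) ℝ) : ℝ :=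
  sSup {c | ∃ h : Fin d → ℝ, l2 h ≤ 1 ∧ c = l1 (h ᵥ* Eᵀ)}

/-- Operator norm of `h ↦ h Eᵀ` from ℓ² to ℓ^∞. -/
noncomputable def opNorm2inf {m d : ℕ} (E : Matrix (Fin m) (Fin d) ℝ) : ℝ :=
  sSup {c | ∃ h : Fin d → ℝ, l2 h ≤ 1 ∧ c = linf (h ᵥ* Eᵀ)}

/-- Condition number `κ(W) = σ_max(W)/σ_min(W)` of an invertible matrix,
expressed as `σ_max(W) · σ_max(W⁻¹)`. -/
noncomputable def condNum {d : ℕ} (W : Matrix (Fin d) (Fin d) ℝ) : ℝ := spec W * spec W⁻¹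

lemma l2_nonneg {n : ℕ} (v : Fin n → ℝ) : 0 ≤ l2 v := Real.sqrt_nonneg _

lemma l2_smul {n : ℕ} (c : ℝ) (v : Fin n → ℝ) : l2 (c • v) = |c| * l2 v := by
  unfold l2
  simp only [Pi.smul_apply, smul_eq_mul, mul_pow]
  rw [← Finset.mul_sum, Real.sqrt_mul (sq_nonneg c), Real.sqrt_sq_eq_abs]

lemma l1_smul {n : ℕ} (c : ℝ) (v : Fin n → ℝ) : l1 (c • v) = |c| * l1 v := by
  unfold l1
  simp only [Pi.smul_apply, smul_eq_mul, abs_mul, Finset.mul_sum]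

lemma l2_le_l1 {n : ℕ} (v : Fin n → ℝ) : l2 v ≤ l1 v := by
  unfold l2 l1
  refine Real.sqrt_le_iff.2 ⟨Finset.sum_nonneg fun _ _ => abs_nonneg _, ?_⟩
  calc ∑ j, v j ^ 2 = ∑ j, |v j| ^ 2 := by simp
    _ ≤ (∑ j, |v j|) ^ 2 := Finset.sum_sq_le_sq_sum_of_nonneg fun _ _ => abs_nonneg _

/-- A crude bound on `x ↦ x W` from `ℓ²` to `ℓ¹`; it makes the suprema defining `spec` and
`opNorm21` suprema of bounded sets. -/
lemma l1_vecMul_le_sum {m n : ℕ} (W : Matrix (Fin m) (Fin n) ℝ) (x : Fin m → ℝ) :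
    l1 (x ᵥ* W) ≤ (∑ j, l2 (fun i => W i j)) * l2 x := by
  unfold l1
  rw [Finset.sum_mul]
  refine Finset.sum_le_sum fun j _ => ?_
  rw [mul_comm]
  refine abs_le_of_sq_le_sq ?_ (mul_nonneg (l2_nonneg _) (l2_nonneg _))
  unfold l2
  rw [mul_pow, Real.sq_sqrt (Finset.sum_nonneg fun _ _ => sq_nonneg _),
    Real.sq_sqrt (Finset.sum_nonneg fun _ _ => sq_nonneg _)]
  exact Finset.sum_mul_sq_le_sq_mul_sq Finset.univ x fun i => W i j

/-- The operator-norm inequality for `x ↦ x W` from `ℓ²` to any absolutely homogeneous `N`, given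
some a priori bound `C`. -/
lemma le_sSup_mul_l2 {m n : ℕ} (W : Matrix (Fin m) (Fin n) ℝ) (N : (Fin n → ℝ) → ℝ)
    (hN : ∀ (c : ℝ) v, N (c • v) = |c| * N v) (C : ℝ) (hC : 0 ≤ C)
    (hb : ∀ x, N (x ᵥ* W) ≤ C * l2 x) (x : Fin m → ℝ) :
    N (x ᵥ* W) ≤ sSup {c | ∃ x : Fin m → ℝ, l2 x ≤ 1 ∧ c = N (x ᵥ* W)} * l2 x := by
  rcases (l2_nonneg x).eq_or_lt with h0 | hpos
  · have := hb x
    rw [← h0] at this ⊢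
    simpa using this
  · have hbdd : BddAbove {c | ∃ x : Fin m → ℝ, l2 x ≤ 1 ∧ c = N (x ᵥ* W)} := by
      refine ⟨C, ?_⟩
      rintro c ⟨y, hy, rfl⟩
      exact (hb y).trans (mul_le_of_le_one_right hC hy)
    have h := le_csSup hbdd ⟨(l2 x)⁻¹ • x, by
      rw [l2_smul, abs_of_pos (inv_pos.2 hpos), inv_mul_cancel₀ hpos.ne'], rfl⟩
    rw [Matrix.smul_vecMul, hN, abs_of_pos (inv_pos.2 hpos)] at h
    rwa [inv_mul_le_iff₀ hpos, mul_comm] at h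

lemma l2_vecMul_le {m n : ℕ} (W : Matrix (Fin m) (Fin n) ℝ) (x : Fin m → ℝ) :
    l2 (x ᵥ* W) ≤ spec W * l2 x :=
  le_sSup_mul_l2 W l2 l2_smul _ (Finset.sum_nonneg fun _ _ => l2_nonneg _)
    (fun x => (l2_le_l1 _).trans (l1_vecMul_le_sum W x)) x

lemma l1_vecMul_le {m d : ℕ} (E : Matrix (Fin m) (Fin d) ℝ) (x : Fin d → ℝ) :
    l1 (x ᵥ* Eᵀ) ≤ opNorm21 E * l2 x :=
  le_sSup_mul_l2 Eᵀ l1 l1_smul _ (Finset.sum_nonneg fun _ _ => l2_nonneg _)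
    (l1_vecMul_le_sum Eᵀ) x

lemma spec_nonneg {m n : ℕ} (W : Matrix (Fin m) (Fin n) ℝ) : 0 ≤ spec W := by
  refine Real.sSup_nonneg ?_
  rintro c ⟨x, -, rfl⟩
  exact l2_nonneg _

lemma opNorm21_nonneg {m d : ℕ} (E : Matrix (Fin m) (Fin d) ℝ) : 0 ≤ opNorm21 E := by
  refine Real.sSup_nonneg ?_
  rintro c ⟨x, -, rfl⟩
  exact Finset.sum_nonneg fun _ _ => abs_nonneg _

/-- A bound on the derivative of a signed softmax average, in unnormalised form: `e j` are the exponential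
weights, `s j` the signs, and `v` the direction of differentiation. -/
lemma abs_softmax_deriv_le {n : ℕ} (e s v : Fin n → ℝ) (he : ∀ j, 0 < e j)
    (hs : ∀ j, |s j| ≤ 1) (hD : 0 < ∑ j, e j) :
    |((∑ j, s j * (e j * v j)) * (∑ j, e j) - (∑ j, s j * e j) * (∑ j, e j * v j))
      / (∑ j, e j) ^ 2| ≤ ∑ j, |v j| := by
  set D := ∑ j, e j with hDdef
  have h1 : (∑ j, s j * (e j * v j)) * D - (∑ j, s j * e j) * (∑ j, e j * v j)
      = ∑ j, v j * (e j * (∑ k, e k * (s j - s k))) := by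
    rw [mul_comm (∑ j, s j * e j), Finset.sum_mul, Finset.sum_mul, ← Finset.sum_sub_distrib]
    refine Finset.sum_congr rfl fun j _ => ?_
    have : ∑ k, e k * (s j - s k) = D * s j - ∑ k, s k * e k := by
      rw [hDdef, Finset.sum_mul, ← Finset.sum_sub_distrib]
      exact Finset.sum_congr rfl fun k _ => by ring
    rw [this]
    ring
  -- the term `k = j` vanishes, which leaves the weight `D - e j`
  have h2 : ∀ j, |∑ k, e k * (s j - s k)| ≤ 2 * (D - e j) := by
    intro j
    have hsplit : ∑ k ∈ Finset.univ.erase j, e k = D - e j := by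
      rw [hDdef, ← Finset.add_sum_erase _ _ (Finset.mem_univ j)]
      ring
    rw [← Finset.add_sum_erase _ _ (Finset.mem_univ j), sub_self, mul_zero, zero_add, ← hsplit,
      Finset.mul_sum]
    refine (Finset.abs_sum_le_sum_abs _ _).trans (Finset.sum_le_sum fun k _ => ?_)
    rw [abs_mul, abs_of_pos (he k), mul_comm]
    refine mul_le_mul_of_nonneg_right ?_ (he k).le
    have := abs_sub (s j) (s k)
    linarith [hs j, hs k]
  rw [h1, abs_div, abs_of_pos (pow_pos hD 2), div_le_iff₀ (pow_pos hD 2), Finset.sum_mul]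
  refine (Finset.abs_sum_le_sum_abs _ _).trans (Finset.sum_le_sum fun j _ => ?_)
  rw [abs_mul, abs_mul, abs_of_pos (he j)]
  refine mul_le_mul_of_nonneg_left ?_ (abs_nonneg _)
  nlinarith [mul_le_mul_of_nonneg_left (h2 j) (he j).le, sq_nonneg (D - e j), sq_nonneg (e j)]

lemma softmax_l1_lipschitz {n : ℕ} (a b : Fin n → ℝ) :
    l1 (fun j => softmax a j - softmax b j) ≤ l1 (fun j => a j - b j) := by
  rcases Nat.eq_zero_or_pos n with rfl | hn
  · simp [l1]
  have : Nonempty (Fin n) := ⟨⟨0, hn⟩⟩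
  set v : Fin n → ℝ := fun j => a j - b j with hv
  set s : Fin n → ℝ := fun j => SignType.sign (softmax a j - softmax b j) with hsdef
  have hs : ∀ j, |s j| ≤ 1 := by
    intro j
    simp only [hsdef]
    rcases SignType.sign (softmax a j - softmax b j) <;> simp
  let e : ℝ → Fin n → ℝ := fun t j => Real.exp (b j + t * v j)
  have he : ∀ t j, 0 < e t j := fun t j => Real.exp_pos _
  have hD : ∀ t, 0 < ∑ j, e t j := fun t =>
    Finset.sum_pos (fun j _ => he t j) Finset.univ_nonempty
  let g : ℝ → ℝ := fun t => (∑ j, s j * e t j) / ∑ j, e t j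
  have hed : ∀ t j, HasDerivAt (fun t => e t j) (e t j * v j) t := by
    intro t j
    have h : HasDerivAt (fun t : ℝ => b j + t * v j) (v j) t := by
      simpa using ((hasDerivAt_id t).mul_const (v j)).const_add (b j)
    exact h.exp
  have hg : ∀ t, HasDerivAt g
      (((∑ j, s j * (e t j * v j)) * (∑ j, e t j) - (∑ j, s j * e t j) * (∑ j, e t j * v j))
      / (∑ j, e t j) ^ 2) t := by
    intro t
    exact (HasDerivAt.fun_sum fun j _ => (hed t j).const_mul (s j)).div
      (HasDerivAt.fun_sum fun j _ => hed t j) (hD t).ne'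
  have hmvt := Convex.norm_image_sub_le_of_norm_hasDerivWithin_le (s := Set.univ) (x := 0) (y := 1)
    (fun t _ => (hg t).hasDerivWithinAt)
    (fun t _ => abs_softmax_deriv_le (e t) s v (he t) hs (hD t)) convex_univ trivial trivial
  have hg1 : g 1 = ∑ j, s j * softmax a j := by
    simp only [g, e, hv, softmax, Finset.sum_div, one_mul, add_sub_cancel, mul_div_assoc]
  have hg0 : g 0 = ∑ j, s j * softmax b j := by
    simp only [g, e, softmax, Finset.sum_div, zero_mul, add_zero, mul_div_assoc]
  have hl : l1 (fun j => softmax a j - softmax b j) = g 1 - g 0 := by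
    rw [hg1, hg0, ← Finset.sum_sub_distrib]
    refine Finset.sum_congr rfl fun j _ => ?_
    rw [← mul_sub]
    exact (sign_mul_self _).symm
  rw [hl]
  refine (le_abs_self _).trans ?_
  simpa [l1] using hmvt

/-- Lipschitz bound for the MLP + softmax head:
`‖softmax(σ(o W_U) W_D Eᵀ) − softmax(σ(ô W_U) W_D Eᵀ)‖₁
  ≤ ‖E‖_{2→1}‖W_D‖₂ G_σ ‖W_U‖₂ ‖o − ô‖₂`. -/
theorem mlp_head_lipschitz {d dint m : ℕ} (Gσ : ℝ)
    (o oh : Fin d → ℝ)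
    (WU : Matrix (Fin d) (Fin dint) ℝ) (WD : Matrix (Fin dint) (Fin d) ℝ)
    (E : Matrix (Fin m) (Fin d) ℝ) (σ : ℝ → ℝ)
    (hσ : ∀ a b : ℝ, |σ a - σ b| ≤ Gσ * |a - b|) :
    l1 (fun j =>
        softmax (((fun k => σ ((o ᵥ* WU) k)) ᵥ* WD) ᵥ* Eᵀ) j
      - softmax (((fun k => σ ((oh ᵥ* WU) k)) ᵥ* WD) ᵥ* Eᵀ) j)
    ≤ opNorm21 E * spec WD * Gσ * spec WU * l2 (fun k => o k - oh k) := by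
  have hG : 0 ≤ Gσ := by simpa using (abs_nonneg _).trans (hσ 1 0)
  set x : Fin dint → ℝ := fun k => σ ((o ᵥ* WU) k) with hx
  set y : Fin dint → ℝ := fun k => σ ((oh ᵥ* WU) k) with hy
  have hact : l2 (x - y) ≤ Gσ * l2 ((o - oh) ᵥ* WU) := by
    rw [← abs_of_nonneg hG, ← l2_smul]
    refine Real.sqrt_le_sqrt (Finset.sum_le_sum fun k _ => sq_le_sq.2 ?_)
    rw [Matrix.sub_vecMul, Pi.smul_apply, smul_eq_mul, abs_mul, abs_of_nonneg hG]
    exact hσ _ _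
  calc l1 (fun j => softmax ((x ᵥ* WD) ᵥ* Eᵀ) j - softmax ((y ᵥ* WD) ᵥ* Eᵀ) j)
      ≤ l1 (((x - y) ᵥ* WD) ᵥ* Eᵀ) := by
        rw [Matrix.sub_vecMul, Matrix.sub_vecMul]
        exact softmax_l1_lipschitz _ _
    _ ≤ opNorm21 E * l2 ((x - y) ᵥ* WD) := l1_vecMul_le _ _
    _ ≤ opNorm21 E * (spec WD * (Gσ * (spec WU * l2 (o - oh)))) := by
        refine mul_le_mul_of_nonneg_left ?_ (opNorm21_nonneg E)
        refine (l2_vecMul_le _ _).trans (mul_le_mul_of_nonneg_left ?_ (spec_nonneg WD))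
        exact hact.trans (mul_le_mul_of_nonneg_left (l2_vecMul_le _ _) hG)
    _ = opNorm21 E * spec WD * Gσ * spec WU * l2 (fun k => o k - oh k) := by
        rw [show (fun k => o k - oh k) = o - oh from rfl]
        ring
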